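/- Suppose that every irreducible factor of the root system Φ is of type A_m, B_m, C_m, or D_m for some m (i.e., Φ contains no exceptional factor). Then for every J ⊆ Δ and every w ∈ W^J there exist t ≥ 0 and a sequence w_0, w_1, …, w_t in W with (w_0)^J = z^J and (w_t)^J = w, such that for every 1 ≤ i ≤ t either (w_i)^J = (u w_{i−1})^J for some u ∈ W_Ω, or both ℓ((w_{i−1})^J) < ℓ((w_i)^J) and (w_i)^J = (s w_{i−1})^J for some s ∈ S. -/

import Mathlib

/-! Common framework: a reduced (crystallographic) root system `Φ` in a real vector
space `V`, with Weyl group `W` (generated by the reflections `s_α`, `α ∈ Φ`, inside the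
group of linear automorphisms of `V`), a base `Δ` of simple roots with positive system
`Pos = Φ⁺`, and the associated combinatorics. -/

open scoped Classical Pointwise

namespace PaperSp

variable {V : Type} [AddCommGroup V] [Module ℝ V]

/-- The data of a reduced crystallographic root system in `V`:  a finite spanning set
`Phi` of nonzero vectors together with, for each root `α`, a linear functional
`pairing α = ⟨·, α∨⟩` taking the value `2` at `α`, such that the associated reflections
`s_α : β ↦ β − ⟨β, α∨⟩α` preserve `Phi`, all pairings are integral, and the only
multiples of a root `α` which are roots are `±α`. -/
structure RootSystemData (V : Type) [AddCommGroup V] [Module ℝ V] : Type where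
  Phi : Set V
  pairing : V → V →ₗ[ℝ] ℝ
  pairing_self : ∀ α, α ∈ Phi → pairing α α = 2
  finite : Phi.Finite
  span_top : Submodule.span ℝ Phi = ⊤
  zero_not_mem : (0 : V) ∉ Phi
  crystallographic : ∀ α ∈ Phi, ∀ β ∈ Phi, ∃ n : ℤ, pairing α β = (n : ℝ)
  reduced : ∀ α ∈ Phi, ∀ t : ℝ, t • α ∈ Phi → t = 1 ∨ t = -1
  reflect_mem : ∀ α ∈ Phi, ∀ β ∈ Phi, β - pairing α β • α ∈ Phi

/-- The reflection `s_α` associated to a root `α` (the identity if `α ∉ Φ`). -/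
noncomputable def RootSystemData.refl (R : RootSystemData V) (α : V) : V ≃ₗ[ℝ] V :=
  if h : α ∈ R.Phi then Module.reflection (R.pairing_self α h) else 1

/-- The set of reflections `{s_α : α ∈ K}` associated to a set `K` of roots. -/
noncomputable def refls (R : RootSystemData V) (K : Set V) : Set (V ≃ₗ[ℝ] V) :=
  {s | ∃ α ∈ K, s = R.refl α}

/-- The Weyl group `W`, generated by all reflections `s_α`, `α ∈ Φ`. -/
noncomputable def weylGroup (R : RootSystemData V) : Subgroup (V ≃ₗ[ℝ] V) :=
  Subgroup.closure (refls R R.Phi)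

/-- The subgroup `W_J` generated by the reflections `s_α`, `α ∈ J`. -/
noncomputable def WsubJ (R : RootSystemData V) (J : Set V) : Subgroup (V ≃ₗ[ℝ] V) :=
  Subgroup.closure (refls R J)

/-- The word length of `w` with respect to a generating set `S` of a group. -/
noncomputable def lengthWrt {G : Type*} [Group G] (S : Set G) (w : G) : ℕ :=
  sInf {n | ∃ ls : List G, ls.length = n ∧ (∀ x ∈ ls, x ∈ S) ∧ ls.prod = w}

/-- The length function `ℓ` on `W` with respect to the simple reflections
`S = {s_α : α ∈ Δ}`. -/
noncomputable def len (R : RootSystemData V) (Δ : Set V) (w : V ≃ₗ[ℝ] V) : ℕ :=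
  lengthWrt (refls R Δ) w

/-- `Pos` and `Δ` form a positive system with base `Δ` for the root system `R`:
`Φ = Pos ⊔ (−Pos)`, `Δ ⊆ Pos` is linearly independent, and every positive root is a
nonnegative integral combination of simple roots. -/
structure IsBase (R : RootSystemData V) (Pos Δ : Set V) : Prop where
  pos_sub : Pos ⊆ R.Phi
  mem_or_neg : ∀ α ∈ R.Phi, α ∈ Pos ∨ -α ∈ Pos
  not_both : ∀ α : V, ¬(α ∈ Pos ∧ -α ∈ Pos)
  delta_sub : Δ ⊆ Pos
  indep : LinearIndependent ℝ (fun a : Δ => (a : V))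
  decomp : ∀ β ∈ Pos, ∃ c : V →₀ ℕ, (c.support : Set V) ⊆ Δ ∧
    β = c.sum (fun a m => (m : ℝ) • a)

/-- The set `W^J = {w ∈ W : w(α) ∈ Φ⁺ for all α ∈ J}` of minimal length representatives
of `W/W_J`. -/
noncomputable def WupJ (R : RootSystemData V) (Pos : Set V) (J : Set V) :
    Set (V ≃ₗ[ℝ] V) :=
  {w | w ∈ weylGroup R ∧ ∀ α ∈ J, w α ∈ Pos}

/-- The set `V^J = W^J \ ⋃_{α ∈ Δ\J} W^{J∪{α}}`. -/
noncomputable def VupJ (R : RootSystemData V) (Pos Δ : Set V) (J : Set V) :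
    Set (V ≃ₗ[ℝ] V) :=
  {w | w ∈ WupJ R Pos J ∧ ∀ α ∈ Δ, α ∉ J → w ∉ WupJ R Pos (J ∪ {α})}

/-- `Φ_J(1) = Φ⁻ \ (Φ⁻ ∩ W_J·J)`. -/
noncomputable def PhiJone (R : RootSystemData V) (Pos : Set V) (J : Set V) : Set V :=
  (R.Phi \ Pos) \ {β | ∃ v ∈ WsubJ R J, ∃ α ∈ J, β = v α}

/-- `Φ_J(w) = w · Φ_J(1)`. -/
noncomputable def PhiJ (R : RootSystemData V) (Pos : Set V) (J : Set V)
    (w : V ≃ₗ[ℝ] V) : Set V :=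
  (fun x => w x) '' (PhiJone R Pos J)

/-- `hProjJ R Pos J pJ` says that `pJ` is the projection `w ↦ (w)^J` sending an element
of `W` to the unique element of `W^J` in the coset `w W_J`. -/
noncomputable def IsProjJ (R : RootSystemData V) (Pos : Set V) (J : Set V)
    (pJ : (V ≃ₗ[ℝ] V) → (V ≃ₗ[ℝ] V)) : Prop :=
  ∀ w ∈ weylGroup R, pJ w ∈ WupJ R Pos J ∧ (pJ w)⁻¹ * w ∈ WsubJ R J

/-- The product `s_i ⋯ s_1` of the first `i` members of a sequence in a group. -/
noncomputable def chainProd {G : Type*} [Group G] (s : ℕ → G) (i : ℕ) : G :=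
  (((List.range' 1 i).map s).reverse).prod

/-- The chain `w^(0) = w`, `w^(i) = (s_i ⋯ s_1 w)^J` associated to `w` and a sequence
of simple reflections. -/
noncomputable def chainElt {G : Type*} [Group G] (pJ : G → G) (s : ℕ → G) (w : G)
    (i : ℕ) : G :=
  if i = 0 then w else pJ (chainProd s i * w)

/-- The partial order `<_J`:  `w <_J w'` iff there are simple reflections
`s_1, …, s_r` (`r ≥ 1`) such that, with `w^(i) = (s_i ⋯ s_1 w)^J`, the lengths
`ℓ(w^(i))` are strictly increasing and `w^(r) = w'`.  Taking `pJ = id`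
(and `J = ∅`) gives the weak left order `<_∅`. -/
noncomputable def ltJ {G : Type*} [Group G] (S : Set G) (ℓ : G → ℕ) (pJ : G → G)
    (w w' : G) : Prop :=
  ∃ r : ℕ, 1 ≤ r ∧ ∃ s : ℕ → G,
    (∀ m, 1 ≤ m → m ≤ r → s m ∈ S) ∧
    (∀ m, 1 ≤ m → m ≤ r → ℓ (chainElt pJ s w (m - 1)) < ℓ (chainElt pJ s w m)) ∧
    chainElt pJ s w r = w'

/-- `w` is the longest element of a subgroup `H` of `W` (with respect to `ℓ`). -/
noncomputable def IsLongestIn (R : RootSystemData V) (Δ : Set V)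
    (H : Subgroup (V ≃ₗ[ℝ] V)) (w : V ≃ₗ[ℝ] V) : Prop :=
  w ∈ H ∧ ∀ v ∈ H, len R Δ v ≤ len R Δ w

end PaperSp

namespace PaperSp

variable {V : Type} [AddCommGroup V] [Module ℝ V]

/-- `parts` is the decomposition of the set `Δ` of simple roots into the (mutually
orthogonal, connected) sets of simple roots of the irreducible factors of `Φ`. -/
structure IsFactorDecomp (R : RootSystemData V) (Δ : Set V) {ι : Type}
    (parts : ι → Set V) : Prop where
  union_eq : (⋃ c, parts c) = Δ
  disj : ∀ c c', c ≠ c' → Disjoint (parts c) (parts c')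
  nonempty : ∀ c, (parts c).Nonempty
  ortho : ∀ c c', c ≠ c' → ∀ a ∈ parts c, ∀ b ∈ parts c', R.pairing a b = 0
  irred : ∀ c, ∀ A B : Set V, A ∪ B = parts c → A.Nonempty → B.Nonempty →
    (∀ a ∈ A, ∀ b ∈ B, R.pairing a b = 0) → False

/-- The roots of the irreducible factor with simple roots `parts c`:  the roots that are
integral combinations of the simple roots in `parts c`. -/
noncomputable def PhiFactor (R : RootSystemData V) {ι : Type} (parts : ι → Set V)
    (c : ι) : Set V :=
  {β | β ∈ R.Phi ∧ ∃ q : V →₀ ℤ, (q.support : Set V) ⊆ parts c ∧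
    β = q.sum (fun a m => (m : ℝ) • a)}

/-- Standard basis vector of `ℝ^k`. -/
noncomputable def eVec {k : ℕ} (i : Fin k) : Fin k → ℝ := fun j => if j = i then 1 else 0

/-- The canonical pairing `⟨β, α∨⟩ = 2(α,β)/(α,α)` of the standard root systems in
Euclidean space. -/
noncomputable def pairStd {k : ℕ} (α β : Fin k → ℝ) : ℝ :=
  2 * (∑ i, α i * β i) / (∑ i, α i * α i)

/-- The root system of type `A_m`: `{e_i − e_j : i ≠ j} ⊆ ℝ^{m+1}`. -/
noncomputable def stdA (m : ℕ) : Set (Fin (m + 1) → ℝ) :=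
  {v | ∃ i j : Fin (m + 1), i ≠ j ∧ v = eVec i - eVec j}

/-- The root system of type `D_m`: `{±e_i ± e_j : i ≠ j} ⊆ ℝ^m`. -/
noncomputable def stdD (m : ℕ) : Set (Fin m → ℝ) :=
  {v | ∃ i j : Fin m, i ≠ j ∧
    (v = eVec i + eVec j ∨ v = eVec i - eVec j ∨
     v = -eVec i + eVec j ∨ v = -eVec i - eVec j)}

/-- The root system of type `B_m`: `{±e_i} ∪ {±e_i ± e_j : i ≠ j} ⊆ ℝ^m`. -/
noncomputable def stdB (m : ℕ) : Set (Fin m → ℝ) :=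
  stdD m ∪ {v | ∃ i : Fin m, v = eVec i ∨ v = -eVec i}

/-- The root system of type `C_m`: `{±2e_i} ∪ {±e_i ± e_j : i ≠ j} ⊆ ℝ^m`. -/
noncomputable def stdC (m : ℕ) : Set (Fin m → ℝ) :=
  stdD m ∪ {v | ∃ i : Fin m, v = (2 : ℝ) • eVec i ∨ v = -((2 : ℝ) • eVec i)}

/-- `Φc` is isomorphic, as a root system, to the standard root system `Ψ ⊆ ℝ^k`:
there is a bijection `Φc → Ψ` preserving the canonical pairings. -/
noncomputable def factorIso {k : ℕ} (R : RootSystemData V) (Φc : Set V)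
    (Ψ : Set (Fin k → ℝ)) : Prop :=
  ∃ φ : V → (Fin k → ℝ), Set.BijOn φ Φc Ψ ∧
    ∀ α ∈ Φc, ∀ β ∈ Φc, pairStd (φ α) (φ β) = R.pairing α β

/-- Every irreducible factor of `Φ` is of classical type `A`, `B`, `C` or `D`. -/
noncomputable def NoExceptionalFactor (R : RootSystemData V) {ι : Type}
    (parts : ι → Set V) : Prop :=
  ∀ c : ι,
    (∃ m : ℕ, factorIso R (PhiFactor R parts c) (stdA m)) ∨
    (∃ m : ℕ, factorIso R (PhiFactor R parts c) (stdB m)) ∨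
    (∃ m : ℕ, factorIso R (PhiFactor R parts c) (stdC m)) ∨
    (∃ m : ℕ, factorIso R (PhiFactor R parts c) (stdD m))

/-- `hr c` is the highest root of the irreducible factor `c` and `hco c` is the
(finitely supported) family of its coefficients over the simple roots `parts c`. -/
structure IsHighestRootData (R : RootSystemData V) (Pos : Set V) {ι : Type}
    (parts : ι → Set V) (hr : ι → V) (hco : ι → (V →₀ ℕ)) : Prop where
  mem_pos : ∀ c, hr c ∈ Pos
  mem_factor : ∀ c, hr c ∈ PhiFactor R parts c
  coeff_supp : ∀ c, (((hco c).support : Set V)) ⊆ parts c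
  coeff_eq : ∀ c, hr c = (hco c).sum (fun a m => (m : ℝ) • a)
  highest : ∀ c, ∀ β ∈ PhiFactor R parts c, ∃ q : V →₀ ℕ,
    (q.support : Set V) ⊆ parts c ∧ hr c - β = q.sum (fun a m => (m : ℝ) • a)

/-- The longest element of a subgroup `H` of the Weyl group (chosen by choice). -/
noncomputable def longestElt (R : RootSystemData V) (Δ : Set V)
    (H : Subgroup (V ≃ₗ[ℝ] V)) : V ≃ₗ[ℝ] V :=
  Classical.epsilon (fun w => IsLongestIn R Δ H w)

/-- The subset `W_Ω` of `W` attached to the irreducible factor `c`: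
`{1} ∪ {w_{Δ^(i)} w_Δc : the coefficient of α_i in the highest root of the factor is 1}`,
where `w_{Δ^(i)}` is the longest element of the subgroup generated by the simple
reflections of the factor other than `s_{α_i}`, and `w_{Δc}` is the longest element of
the Weyl group of the factor. -/
noncomputable def OmegaSet (R : RootSystemData V) (Δ : Set V) {ι : Type}
    (parts : ι → Set V) (hco : ι → (V →₀ ℕ)) (c : ι) : Set (V ≃ₗ[ℝ] V) :=
  {u | u = 1 ∨ ∃ a ∈ parts c, hco c a = 1 ∧
    u = longestElt R Δ (WsubJ R (parts c \ {a})) * longestElt R Δ (WsubJ R (parts c))}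

/-- The subgroup `W_Ω ⊆ W`: the product of the subgroups `W_Ω` of the irreducible
factors. -/
noncomputable def WOmega (R : RootSystemData V) (Δ : Set V) {ι : Type}
    (parts : ι → Set V) (hco : ι → (V →₀ ℕ)) : Subgroup (V ≃ₗ[ℝ] V) :=
  Subgroup.closure (⋃ c, OmegaSet R Δ parts hco c)

end PaperSp

/-!
Call `T ⊆ W` closed if `W_Ω T = T` and `s_a x ∈ T` whenever `x ∈ T`, `a ∈ Δ` and
`ℓ(s_a x) > ℓ(x)`. It is enough to show that a nonempty closed set is all of `W`: projecting to
`W^J`, a step `x ↦ s_a x` which increases the length either fixes `(x)^J` or increases its length.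

For `T` closed consider the functional `F = ∑_{x ∈ T} ht ∘ x⁻¹`. At a simple root `a` the terms of
`x` and `s_a x` cancel, so only those `x ∈ T` with `s_a x ∉ T` contribute; for these `x⁻¹ a` is
negative. Hence `F a ≤ 0`, with equality only if `s_a T = T`. On the other hand `F` is invariant
under `W_Ω`, which contains an element `u` sending the highest root `θ` of a given classical factor
to `-a` for a simple root `a`, so `F θ = -F a ≥ 0`. As `θ` is a combination of the simple roots of
its factor with positive coefficients, `F` vanishes on all of them. Thus `T` is stable under every
simple reflection.

Such a `u` exists as soon as some simple root has coefficient `1` in `θ`, equivalently if some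
functional is minuscule on the factor; for types `A` to `D` these functionals are given by
coordinates.
-/

namespace PaperSp

variable {V : Type} [AddCommGroup V] [Module ℝ V] {R : RootSystemData V} {Pos Δ : Set V}

namespace RootSystemData

variable {α β : V} {w : V ≃ₗ[ℝ] V}

theorem ne_zero_of_mem (hα : α ∈ R.Phi) : α ≠ 0 :=
  ne_of_mem_of_not_mem hα R.zero_not_mem

theorem refl_apply (hα : α ∈ R.Phi) (x : V) : R.refl α x = x - R.pairing α x • α := by
  simp [refl, hα, Module.reflection_apply]

theorem refl_apply_self (hα : α ∈ R.Phi) : R.refl α α = -α := by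
  simp [refl, hα]

theorem refl_mul_self (hα : α ∈ R.Phi) : R.refl α * R.refl α = 1 := by
  ext x
  simp [refl, hα, (Module.involutive_reflection (R.pairing_self α hα)).eq_iff]

theorem refl_refl_apply (hα : α ∈ R.Phi) (x : V) : R.refl α (R.refl α x) = x :=
  LinearEquiv.congr_fun (refl_mul_self hα) x

theorem refl_inv (hα : α ∈ R.Phi) : (R.refl α)⁻¹ = R.refl α :=
  inv_eq_of_mul_eq_one_left (refl_mul_self hα)

theorem refl_mem_WsubJ {K : Set V} (hα : α ∈ K) : R.refl α ∈ WsubJ R K :=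
  Subgroup.subset_closure ⟨α, hα, rfl⟩

theorem WsubJ_mono {K L : Set V} (h : K ⊆ L) : WsubJ R K ≤ WsubJ R L :=
  Subgroup.closure_mono fun _ ⟨a, ha, hs⟩ ↦ ⟨a, h ha, hs⟩

theorem refl_mem_weylGroup (hα : α ∈ R.Phi) : R.refl α ∈ weylGroup R :=
  refl_mem_WsubJ hα

@[elab_as_elim]
theorem WsubJ_induction {K : Set V} (hK : K ⊆ R.Phi) {p : ∀ w, w ∈ WsubJ R K → Prop}
    (one : p 1 (one_mem _))
    (refl_mul : ∀ a (ha : a ∈ K) w (hw : w ∈ WsubJ R K), p w hw →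
      p (R.refl a * w) (mul_mem (refl_mem_WsubJ ha) hw))
    {w : V ≃ₗ[ℝ] V} (hw : w ∈ WsubJ R K) : p w hw := by
  induction hw using Subgroup.closure_induction_left with
  | one => exact one
  | mul_left s hs w hw ih =>
    obtain ⟨a, ha, rfl⟩ := hs
    exact refl_mul a ha w hw ih
  | inv_mul_cancel s hs w hw ih =>
    obtain ⟨a, ha, rfl⟩ := hs
    simpa only [refl_inv (hK ha)] using refl_mul a ha w hw ih

theorem apply_mem (hw : w ∈ weylGroup R) (hβ : β ∈ R.Phi) : w β ∈ R.Phi := by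
  induction hw using WsubJ_induction subset_rfl with
  | one => exact hβ
  | refl_mul a ha w _ ih =>
    rw [LinearEquiv.mul_apply, refl_apply ha]
    exact R.reflect_mem a ha _ ih

theorem neg_mem (hα : α ∈ R.Phi) : -α ∈ R.Phi :=
  refl_apply_self hα ▸ apply_mem (refl_mem_weylGroup hα) hα

theorem pairing_apply_apply (hw : w ∈ weylGroup R) (hα : α ∈ R.Phi) (x : V) :
    R.pairing (w α) (w x) = R.pairing α x := by
  -- A finite spanning set stable under two reflections in the same vector makes them equal.
  have heq : R.pairing α ∘ₗ (w⁻¹ : V ≃ₗ[ℝ] V) = R.pairing (w α) := by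
    refine Module.Dual.eq_of_preReflection_mapsTo (x := w α) R.finite R.span_top ?_ ?_
      (R.pairing_self _ (apply_mem hw hα)) (R.reflect_mem _ (apply_mem hw hα))
    · simp [R.pairing_self α hα]
    · intro β hβ
      simpa [Module.preReflection_apply] using
        apply_mem hw (R.reflect_mem α hα _ (apply_mem (inv_mem hw) hβ))
  simp [← heq]

theorem refl_apply_mul (hw : w ∈ weylGroup R) (hα : α ∈ R.Phi) :
    R.refl (w α) * w = w * R.refl α := by
  ext x
  simp [refl_apply hα, refl_apply (apply_mem hw hα), pairing_apply_apply hw hα]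

theorem refl_neg (hα : α ∈ R.Phi) : R.refl (-α) = R.refl α := by
  have h := refl_apply_mul (refl_mem_weylGroup hα) hα
  rwa [refl_apply_self hα, mul_left_inj] at h

theorem finite_weylGroup (R : RootSystemData V) :
    (weylGroup R : Set (V ≃ₗ[ℝ] V)).Finite := by
  have : Finite R.Phi := R.finite
  let perm : weylGroup R → R.Phi → R.Phi := fun w x ↦ ⟨w.1 x, apply_mem w.2 x.2⟩
  have hperm : Function.Injective perm := fun w w' h ↦ Subtype.ext <|
    LinearEquiv.toLinearMap_injective <| LinearMap.ext_on R.span_top fun x hx ↦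
      congrArg Subtype.val (congrFun h ⟨x, hx⟩)
  exact Set.finite_coe_iff.1 (Finite.of_injective perm hperm)

end RootSystemData

namespace IsBase

open RootSystemData

variable {a b β x : V} {K : Set V}

theorem simple_mem (hB : IsBase R Pos Δ) (ha : a ∈ Δ) : a ∈ R.Phi :=
  hB.pos_sub (hB.delta_sub ha)

theorem simple_subset (hB : IsBase R Pos Δ) : Δ ⊆ R.Phi := fun _ ↦ hB.simple_mem

theorem neg_mem_pos (hB : IsBase R Pos Δ) (hβ : β ∈ R.Phi) (h : β ∉ Pos) : -β ∈ Pos :=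
  (hB.mem_or_neg β hβ).resolve_left h

theorem neg_notMem_pos (hB : IsBase R Pos Δ) (h : β ∈ Pos) : -β ∉ Pos :=
  fun h' ↦ hB.not_both β ⟨h, h'⟩

theorem finite_pos (hB : IsBase R Pos Δ) : Pos.Finite :=
  R.finite.subset hB.pos_sub

theorem finite_simple (hB : IsBase R Pos Δ) : Δ.Finite :=
  hB.finite_pos.subset hB.delta_sub

theorem span_simple (hB : IsBase R Pos Δ) : Submodule.span ℝ Δ = ⊤ := by
  have hpos : ∀ β ∈ Pos, β ∈ Submodule.span ℝ Δ := fun β hβ ↦ by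
    obtain ⟨q, hq, rfl⟩ := hB.decomp β hβ
    exact Submodule.sum_mem _ fun a ha ↦ Submodule.smul_mem _ _ (Submodule.subset_span (hq ha))
  rw [eq_top_iff, ← R.span_top, Submodule.span_le]
  intro β hβ
  rcases hB.mem_or_neg β hβ with h | h
  · exact hpos β h
  · exact neg_mem_iff.1 (hpos _ h)

/-- The basis of `V` formed by the simple roots. -/
noncomputable def basis (hB : IsBase R Pos Δ) : Module.Basis Δ ℝ V :=
  Module.Basis.mk hB.indep (by simp [hB.span_simple])

/-- The coefficient of a vector at the simple root `a`; it is defined to be zero for `a ∉ Δ`, so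
that a vector is supported in `K ⊆ Δ` when its coefficients vanish at every `b ∉ K`. -/
noncomputable def coeff (hB : IsBase R Pos Δ) (a : V) : V →ₗ[ℝ] ℝ :=
  if ha : a ∈ Δ then hB.basis.coord ⟨a, ha⟩ else 0

theorem coeff_of_notMem (hB : IsBase R Pos Δ) (ha : a ∉ Δ) : hB.coeff a = 0 :=
  dif_neg ha

theorem coeff_simple (hB : IsBase R Pos Δ) (hb : b ∈ Δ) :
    hB.coeff a b = if b = a then 1 else 0 := by
  have hbasis : hB.basis ⟨b, hb⟩ = b := by simp [basis]
  by_cases ha : a ∈ Δ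
  · conv_lhs => rw [← hbasis]
    simp [coeff, ha, Finsupp.single_apply]
  · rw [hB.coeff_of_notMem ha, if_neg (ne_of_mem_of_not_mem hb ha), LinearMap.zero_apply]

theorem coeff_self (hB : IsBase R Pos Δ) (ha : a ∈ Δ) : hB.coeff a a = 1 := by
  rw [hB.coeff_simple ha, if_pos rfl]

theorem coeff_of_ne (hB : IsBase R Pos Δ) (hb : b ∈ Δ) (h : b ≠ a) : hB.coeff a b = 0 := by
  rw [hB.coeff_simple hb, if_neg h]

theorem sum_coeff_smul (hB : IsBase R Pos Δ) (x : V) :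
    ∑ a ∈ hB.finite_simple.toFinset, hB.coeff a x • a = x := by
  refine hB.basis.ext_elem fun a ↦ ?_
  have hcoord : ∀ y, hB.basis.repr y a = hB.coeff a y := by simp [coeff]
  rw [hcoord, hcoord, map_sum,
    Finset.sum_eq_single_of_mem a.1 (hB.finite_simple.mem_toFinset.2 a.2)]
  · rw [map_smul, hB.coeff_self a.2, smul_eq_mul, mul_one]
  · intro b hb hba
    rw [map_smul, hB.coeff_of_ne (hB.finite_simple.mem_toFinset.1 hb) hba, smul_zero]

theorem map_eq_sum_coeff (hB : IsBase R Pos Δ) (f : V →ₗ[ℝ] ℝ) (x : V) :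
    f x = ∑ a ∈ hB.finite_simple.toFinset, hB.coeff a x * f a := by
  conv_lhs => rw [← hB.sum_coeff_smul x]
  simp only [map_sum, map_smul, smul_eq_mul]

theorem map_nonneg (hB : IsBase R Pos Δ) {f : V →ₗ[ℝ] ℝ}
    (h : ∀ a ∈ Δ, 0 ≤ hB.coeff a x * f a) : 0 ≤ f x := by
  rw [hB.map_eq_sum_coeff]
  exact Finset.sum_nonneg fun a ha ↦ h a (hB.finite_simple.mem_toFinset.1 ha)

theorem coeff_finsuppSum {N : Type*} [Zero N] (hB : IsBase R Pos Δ) (g : ZeroHom N ℝ) {q : V →₀ N}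
    (hq : (q.support : Set V) ⊆ Δ) : hB.coeff a (q.sum fun b n ↦ g n • b) = g (q a) := by
  rw [map_finsuppSum, Finsupp.sum_eq_single a]
  · by_cases ha : a ∈ Δ
    · simp [hB.coeff_self ha]
    · simp [Finsupp.notMem_support_iff.1 fun h ↦ ha (hq h)]
  · intro b hb hba
    simp [hB.coeff_of_ne (hq (Finsupp.mem_support_iff.2 hb)) hba]
  · simp

theorem coeff_nat (hB : IsBase R Pos Δ) {q : V →₀ ℕ} (hq : (q.support : Set V) ⊆ Δ) :
    hB.coeff a (q.sum fun b n ↦ (n : ℝ) • b) = q a :=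
  hB.coeff_finsuppSum (Nat.castAddMonoidHom ℝ : ZeroHom ℕ ℝ) hq

theorem coeff_int (hB : IsBase R Pos Δ) {q : V →₀ ℤ} (hq : (q.support : Set V) ⊆ Δ) :
    hB.coeff a (q.sum fun b n ↦ (n : ℝ) • b) = q a :=
  hB.coeff_finsuppSum (Int.castAddHom ℝ : ZeroHom ℤ ℝ) hq

theorem exists_nat_coeff_eq (hB : IsBase R Pos Δ) (hβ : β ∈ Pos) (a : V) :
    ∃ n : ℕ, hB.coeff a β = n := by
  obtain ⟨q, hq, rfl⟩ := hB.decomp β hβ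
  exact ⟨q a, hB.coeff_nat hq⟩

theorem coeff_nonneg (hB : IsBase R Pos Δ) (hβ : β ∈ Pos) (a : V) : 0 ≤ hB.coeff a β := by
  obtain ⟨n, hn⟩ := hB.exists_nat_coeff_eq hβ a
  exact hn ▸ n.cast_nonneg

theorem coeff_nonpos (hB : IsBase R Pos Δ) (hβ : β ∈ R.Phi) (h : β ∉ Pos) (a : V) :
    hB.coeff a β ≤ 0 := by
  simpa using hB.coeff_nonneg (hB.neg_mem_pos hβ h) a

theorem mem_pos_of_coeff_pos (hB : IsBase R Pos Δ) (hβ : β ∈ R.Phi) (h : 0 < hB.coeff a β) :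
    β ∈ Pos := by
  contrapose! h
  exact hB.coeff_nonpos hβ h a

/-- The height functional, taking the value `1` at every simple root. -/
noncomputable def height (hB : IsBase R Pos Δ) : V →ₗ[ℝ] ℝ :=
  ∑ a ∈ hB.finite_simple.toFinset, hB.coeff a

theorem height_apply (hB : IsBase R Pos Δ) (x : V) :
    hB.height x = ∑ a ∈ hB.finite_simple.toFinset, hB.coeff a x :=
  LinearMap.sum_apply _ _ _

theorem height_pos (hB : IsBase R Pos Δ) (hβ : β ∈ Pos) : 0 < hB.height β := by
  rw [height_apply]
  refine (Finset.sum_nonneg fun a _ ↦ hB.coeff_nonneg hβ a).lt_of_ne' fun h ↦ ?_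
  rw [Finset.sum_eq_zero_iff_of_nonneg fun a _ ↦ hB.coeff_nonneg hβ a] at h
  refine ne_zero_of_mem (hB.pos_sub hβ) ?_
  rw [← hB.sum_coeff_smul β]
  exact Finset.sum_eq_zero fun a ha ↦ by rw [h a ha, zero_smul]

theorem height_neg (hB : IsBase R Pos Δ) (hβ : β ∈ R.Phi) (h : β ∉ Pos) : hB.height β < 0 := by
  simpa using hB.height_pos (hB.neg_mem_pos hβ h)

theorem mem_pos_of_height_nonneg (hB : IsBase R Pos Δ) (hβ : β ∈ R.Phi)
    (h : 0 ≤ hB.height β) : β ∈ Pos := by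
  contrapose! h
  exact hB.height_neg hβ h

theorem eq_of_coeff_eq_zero (hB : IsBase R Pos Δ) (ha : a ∈ Δ) (hβ : β ∈ Pos)
    (h : ∀ b, b ≠ a → hB.coeff b β = 0) : β = a := by
  have hsmul : hB.coeff a β • a = β := by
    conv_rhs => rw [← hB.sum_coeff_smul β]
    rw [Finset.sum_eq_single_of_mem a (hB.finite_simple.mem_toFinset.2 ha)]
    exact fun b _ hba ↦ by rw [h b hba, zero_smul]
  rcases R.reduced a (hB.simple_mem ha) _ (hsmul ▸ hB.pos_sub hβ) with h1 | h1
  · rw [← hsmul, h1, one_smul]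
  · linarith [hB.coeff_nonneg hβ a]

theorem refl_simple_mem_pos (hB : IsBase R Pos Δ) (ha : a ∈ Δ) (hβ : β ∈ Pos) (hne : β ≠ a) :
    R.refl a β ∈ Pos := by
  obtain ⟨b, hba, hb⟩ : ∃ b, b ≠ a ∧ hB.coeff b β ≠ 0 := by
    by_contra! h
    exact hne (hB.eq_of_coeff_eq_zero ha hβ h)
  have hsame : hB.coeff b (R.refl a β) = hB.coeff b β := by
    simp [refl_apply (hB.simple_mem ha), hB.coeff_of_ne ha hba.symm]
  exact hB.mem_pos_of_coeff_pos (apply_mem (refl_mem_weylGroup (hB.simple_mem ha)) (hB.pos_sub hβ))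
    (hsame ▸ (hB.coeff_nonneg hβ b).lt_of_ne' hb)

theorem WsubJ_le_weylGroup (hB : IsBase R Pos Δ) (hK : K ⊆ Δ) : WsubJ R K ≤ weylGroup R :=
  WsubJ_mono (hK.trans hB.simple_subset)

theorem refl_simple_sum_pos (hB : IsBase R Pos Δ) (ha : a ∈ Δ) :
    R.refl a (∑ γ ∈ hB.finite_pos.toFinset, γ) =
      ∑ γ ∈ hB.finite_pos.toFinset, γ - (2 : ℝ) • a := by
  have haΦ := hB.simple_mem ha
  have hapos : a ∈ hB.finite_pos.toFinset := hB.finite_pos.mem_toFinset.2 (hB.delta_sub ha)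
  have hrest : ∑ γ ∈ hB.finite_pos.toFinset.erase a, R.refl a γ =
      ∑ γ ∈ hB.finite_pos.toFinset.erase a, γ := by
    have hmaps : ∀ γ ∈ hB.finite_pos.toFinset.erase a,
        R.refl a γ ∈ hB.finite_pos.toFinset.erase a := fun γ hγ ↦ by
      simp only [Finset.mem_erase, Set.Finite.mem_toFinset] at hγ ⊢
      refine ⟨fun h ↦ hB.neg_notMem_pos (hB.delta_sub ha) ?_,
        hB.refl_simple_mem_pos ha hγ.2 hγ.1⟩
      have hγa : γ = -a := by rw [← refl_apply_self haΦ, ← refl_refl_apply haΦ γ, h]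
      exact hγa ▸ hγ.2
    exact Finset.sum_bij' (fun γ _ ↦ R.refl a γ) (fun γ _ ↦ R.refl a γ) hmaps hmaps
      (fun γ _ ↦ refl_refl_apply haΦ γ) (fun γ _ ↦ refl_refl_apply haΦ γ) fun _ _ ↦ rfl
  rw [map_sum, ← Finset.add_sum_erase _ _ hapos, ← Finset.add_sum_erase _ (fun γ ↦ γ) hapos,
    hrest, refl_apply_self haΦ]
  module

theorem exists_dominant (hB : IsBase R Pos Δ) (hK : K ⊆ Δ) (f : V →ₗ[ℝ] ℝ) :
    ∃ w ∈ WsubJ R K, ∀ a ∈ K, 0 ≤ f (w a) := by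
  have hfin : (WsubJ R K : Set (V ≃ₗ[ℝ] V)).Finite :=
    (finite_weylGroup R).subset (hB.WsubJ_le_weylGroup hK)
  obtain ⟨w, hw, hmax⟩ := Set.exists_max_image _
    (fun w ↦ f (w (∑ γ ∈ hB.finite_pos.toFinset, γ))) hfin ⟨1, one_mem _⟩
  refine ⟨w, hw, fun a ha ↦ ?_⟩
  have hle := hmax _ (mul_mem hw (refl_mem_WsubJ ha))
  rw [LinearEquiv.mul_apply, hB.refl_simple_sum_pos (hK ha)] at hle
  simp only [map_sub, map_smul, smul_eq_mul] at hle
  linarith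

theorem exists_apply_eq_simple (hB : IsBase R Pos Δ) {w : V ≃ₗ[ℝ] V} (hw : w ∈ WsubJ R Δ)
    (hβ : β ∈ Pos) (h : w β ∉ Pos) : ∃ y ∈ WsubJ R Δ, ∃ a ∈ Δ, y β = a := by
  induction hw using WsubJ_induction hB.simple_subset with
  | one => exact absurd hβ h
  | refl_mul a ha w hw ih =>
    by_cases hwβ : w β ∈ Pos
    · refine ⟨w, hw, a, ha, ?_⟩
      by_contra hne
      exact h (hB.refl_simple_mem_pos ha hwβ hne)
    · exact ih hwβ

theorem weylGroup_eq_WsubJ (hB : IsBase R Pos Δ) : weylGroup R = WsubJ R Δ := by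
  obtain ⟨w, hw, hdom⟩ := hB.exists_dominant subset_rfl (-hB.height)
  have hrefl : ∀ β ∈ Pos, R.refl β ∈ WsubJ R Δ := fun β hβ ↦ by
    have hneg : w β ∉ Pos := fun h ↦ by
      have := hB.map_nonneg (x := β) (f := -hB.height ∘ₗ w) fun a ha ↦
        mul_nonneg (hB.coeff_nonneg hβ a) (hdom a ha)
      linarith [hB.height_pos h, show -hB.height (w β) ≥ 0 from this]
    obtain ⟨y, hy, a, ha, hya⟩ := hB.exists_apply_eq_simple hw hβ hneg
    have hconj := refl_apply_mul (hB.WsubJ_le_weylGroup subset_rfl hy) (hB.pos_sub hβ)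
    rw [hya] at hconj
    rw [← inv_mul_cancel_left y (R.refl β), ← hconj]
    exact mul_mem (inv_mem hy) (mul_mem (refl_mem_WsubJ ha) hy)
  refine le_antisymm ((Subgroup.closure_le _).2 ?_) (hB.WsubJ_le_weylGroup subset_rfl)
  rintro _ ⟨β, hβ, rfl⟩
  rcases hB.mem_or_neg β hβ with h | h
  · exact hrefl β h
  · rw [← refl_neg hβ]
    exact hrefl _ h

end IsBase

section WordLength

variable {G : Type*} [Group G] {S : Set G} {l : List G}

theorem lengthWrt_prod_le (hl : ∀ s ∈ l, s ∈ S) : lengthWrt S l.prod ≤ l.length :=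
  Nat.sInf_le ⟨l, rfl, hl, rfl⟩

theorem exists_reduced_word (hS : ∀ s ∈ S, s⁻¹ ∈ S) {w : G} (hw : w ∈ Subgroup.closure S) :
    ∃ l : List G, (∀ s ∈ l, s ∈ S) ∧ l.prod = w ∧ l.length = lengthWrt S w := by
  have hsub : S⁻¹ ⊆ S := fun s hs ↦ inv_inv s ▸ hS _ hs
  rw [← Subgroup.mem_toSubmonoid, Subgroup.closure_toSubmonoid, Set.union_eq_left.2 hsub] at hw
  obtain ⟨l, hl, hprod⟩ := Submonoid.exists_list_of_mem_closure hw
  obtain ⟨r, hr, hrS, hrw⟩ := Nat.sInf_mem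
    (s := {n | ∃ l : List G, l.length = n ∧ (∀ s ∈ l, s ∈ S) ∧ l.prod = w}) ⟨_, l, rfl, hl, hprod⟩
  exact ⟨r, hrS, hrw, hr⟩

theorem lengthWrt_inv (hS : ∀ s ∈ S, s⁻¹ ∈ S) (w : G) : lengthWrt S w⁻¹ = lengthWrt S w := by
  have hsub : ∀ v n, (∃ l : List G, l.length = n ∧ (∀ s ∈ l, s ∈ S) ∧ l.prod = v) →
      ∃ l : List G, l.length = n ∧ (∀ s ∈ l, s ∈ S) ∧ l.prod = v⁻¹ := by
    rintro _ _ ⟨l, rfl, hl, rfl⟩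
    refine ⟨(l.map fun s ↦ s⁻¹).reverse, by simp, fun s hs ↦ ?_, (List.prod_inv_reverse l).symm⟩
    obtain ⟨t, ht, rfl⟩ := List.mem_map.1 (List.mem_reverse.1 hs)
    exact hS t (hl t ht)
  unfold lengthWrt
  congr 1
  ext n
  exact ⟨fun h ↦ inv_inv w ▸ hsub _ _ h, hsub w n⟩

end WordLength

namespace IsBase

open RootSystemData

variable {a b β x : V} {K J : Set V} {w v : V ≃ₗ[ℝ] V}

theorem inv_mem_refls (hB : IsBase R Pos Δ) : ∀ s ∈ refls R Δ, s⁻¹ ∈ refls R Δ := by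
  rintro _ ⟨a, ha, rfl⟩
  exact ⟨a, ha, refl_inv (hB.simple_mem ha)⟩

theorem exists_reduced_word (hB : IsBase R Pos Δ) (hw : w ∈ weylGroup R) :
    ∃ l : List (V ≃ₗ[ℝ] V), (∀ s ∈ l, s ∈ refls R Δ) ∧ l.prod = w ∧ l.length = len R Δ w :=
  PaperSp.exists_reduced_word hB.inv_mem_refls (hB.weylGroup_eq_WsubJ.le hw)

theorem exists_word_refl_mul (hB : IsBase R Pos Δ) {l : List (V ≃ₗ[ℝ] V)}
    (hl : ∀ s ∈ l, s ∈ refls R Δ) (hβ : β ∈ Pos) (h : l.prod⁻¹ β ∉ Pos) :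
    ∃ l' : List (V ≃ₗ[ℝ] V), l'.length + 1 = l.length ∧ (∀ s ∈ l', s ∈ refls R Δ) ∧
      R.refl β * l.prod = l'.prod := by
  induction l generalizing β with
  | nil => exact absurd hβ h
  | cons s t ih =>
    rw [List.forall_mem_cons] at hl
    obtain ⟨⟨b, hb, rfl⟩, ht⟩ := hl
    have hbΦ := hB.simple_mem hb
    rw [List.prod_cons] at h ⊢
    by_cases hβb : β = b
    · exact ⟨t, rfl, ht, by rw [hβb, ← mul_assoc, refl_mul_self hbΦ, one_mul]⟩
    · have hbβ := hB.refl_simple_mem_pos hb hβ hβb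
      rw [mul_inv_rev, refl_inv hbΦ] at h
      obtain ⟨t', hlen, ht', hprod⟩ := ih ht hbβ h
      refine ⟨R.refl b :: t', by rw [List.length_cons, hlen, List.length_cons],
        List.forall_mem_cons.2 ⟨⟨b, hb, rfl⟩, ht'⟩, ?_⟩
      have hconj := refl_apply_mul (refl_mem_weylGroup hbΦ) (hB.pos_sub hbβ)
      rw [refl_refl_apply hbΦ] at hconj
      rw [List.prod_cons, ← hprod, ← mul_assoc, hconj, mul_assoc]

theorem len_lt_len_refl_mul (hB : IsBase R Pos Δ) (hw : w ∈ weylGroup R) (ha : a ∈ Δ)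
    (h : w⁻¹ a ∈ Pos) : len R Δ w < len R Δ (R.refl a * w) := by
  have haΦ := hB.simple_mem ha
  obtain ⟨l, hl, hprod, hlen⟩ :=
    hB.exists_reduced_word (mul_mem (refl_mem_weylGroup haΦ) hw)
  have hneg : l.prod⁻¹ a ∉ Pos := by
    rw [hprod, mul_inv_rev, refl_inv haΦ, LinearEquiv.mul_apply, refl_apply_self haΦ, map_neg]
    exact hB.neg_notMem_pos h
  obtain ⟨l', hlen', hl', hprod'⟩ := hB.exists_word_refl_mul hl (hB.delta_sub ha) hneg
  rw [hprod, ← mul_assoc, refl_mul_self haΦ, one_mul] at hprod'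
  have hle := lengthWrt_prod_le hl'
  rw [← hprod'] at hle
  rw [← hlen, ← hlen']
  exact Nat.lt_succ_of_le hle

theorem len_lt_len_mul_refl (hB : IsBase R Pos Δ) (hw : w ∈ weylGroup R) (ha : a ∈ Δ)
    (h : w a ∈ Pos) : len R Δ w < len R Δ (w * R.refl a) := by
  have hlt := hB.len_lt_len_refl_mul (inv_mem hw) ha (by rwa [inv_inv])
  rwa [← refl_inv (hB.simple_mem ha), ← mul_inv_rev, len, len, lengthWrt_inv hB.inv_mem_refls,
    lengthWrt_inv hB.inv_mem_refls] at hlt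

theorem eq_one_of_forall_simple (hB : IsBase R Pos Δ) (hw : w ∈ weylGroup R)
    (h : ∀ a ∈ Δ, w a ∈ Pos) : w = 1 := by
  obtain ⟨l, hl, hprod, hlen⟩ := hB.exists_reduced_word (inv_mem hw)
  rw [← inv_eq_one, ← hprod]
  cases l with
  | nil => rfl
  | cons s t =>
    rw [List.forall_mem_cons] at hl
    obtain ⟨⟨b, hb, rfl⟩, ht⟩ := hl
    have hlt := hB.len_lt_len_refl_mul (inv_mem hw) hb (by simpa using h b hb)
    have hle : len R Δ t.prod ≤ t.length := lengthWrt_prod_le ht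
    rw [← hlen, ← hprod, List.prod_cons, ← mul_assoc, refl_mul_self (hB.simple_mem hb), one_mul,
      List.length_cons] at hlt
    omega

theorem coeff_apply_of_mem_WsubJ (hB : IsBase R Pos Δ) (hK : K ⊆ Δ) (hv : v ∈ WsubJ R K)
    (hb : b ∉ K) (x : V) : hB.coeff b (v x) = hB.coeff b x := by
  induction hv using WsubJ_induction (hK.trans hB.simple_subset) with
  | one => rfl
  | refl_mul a ha v hv ih =>
    rw [LinearEquiv.mul_apply, refl_apply (hB.simple_mem (hK ha)), map_sub, map_smul,
      hB.coeff_of_ne (hK ha) (ne_of_mem_of_not_mem ha hb), smul_zero, sub_zero, ih]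

theorem coeff_eq_zero_of_apply_notMem_pos (hB : IsBase R Pos Δ) (hK : K ⊆ Δ)
    (hv : v ∈ WsubJ R K) (hβ : β ∈ Pos) (h : v β ∉ Pos) (hb : b ∉ K) : hB.coeff b β = 0 := by
  refine le_antisymm ?_ (hB.coeff_nonneg hβ b)
  rw [← hB.coeff_apply_of_mem_WsubJ hK hv hb]
  exact hB.coeff_nonpos (apply_mem (hB.WsubJ_le_weylGroup hK hv) (hB.pos_sub hβ)) h b

theorem apply_mem_pos_of_mem_WupJ (hB : IsBase R Pos Δ) (hw : w ∈ WupJ R Pos J) (hβ : β ∈ Pos)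
    (h : ∀ b ∉ J, hB.coeff b β = 0) : w β ∈ Pos := by
  refine hB.mem_pos_of_height_nonneg (apply_mem hw.1 (hB.pos_sub hβ))
    (hB.map_nonneg (f := hB.height ∘ₗ w) fun a _ ↦ ?_)
  by_cases ha : a ∈ J
  · exact mul_nonneg (hB.coeff_nonneg hβ a) (hB.height_pos (hw.2 a ha)).le
  · rw [h a ha, zero_mul]

theorem eq_of_mem_WupJ (hB : IsBase R Pos Δ) (hJ : J ⊆ Δ) (hw : w ∈ WupJ R Pos J)
    (hv : v ∈ WupJ R Pos J) (h : w⁻¹ * v ∈ WsubJ R J) : w = v := by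
  have hW := hB.WsubJ_le_weylGroup hJ h
  rw [← inv_mul_eq_one]
  refine hB.eq_one_of_forall_simple hW fun a ha ↦ ?_
  by_cases haJ : a ∈ J
  · by_contra hneg
    have hpos := hB.apply_mem_pos_of_mem_WupJ hw
      (hB.neg_mem_pos (apply_mem hW (hB.simple_mem ha)) hneg) fun b hb ↦ by
        rw [map_neg, hB.coeff_apply_of_mem_WsubJ hJ h hb,
          hB.coeff_of_ne ha (ne_of_mem_of_not_mem haJ hb), neg_zero]
    have heq : w (-(w⁻¹ * v) a) = -v a := by simp
    exact hB.neg_notMem_pos (hv.2 a haJ) (heq ▸ hpos)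
  · refine hB.mem_pos_of_coeff_pos (a := a) (apply_mem hW (hB.simple_mem ha)) ?_
    rw [hB.coeff_apply_of_mem_WsubJ hJ h haJ, hB.coeff_self ha]
    exact one_pos

theorem isProjJ_apply_eq (hB : IsBase R Pos Δ) (hJ : J ⊆ Δ) {pJ : (V ≃ₗ[ℝ] V) → (V ≃ₗ[ℝ] V)}
    (hpJ : IsProjJ R Pos J pJ) (hw : w ∈ weylGroup R) (hv : v ∈ WupJ R Pos J)
    (h : v⁻¹ * w ∈ WsubJ R J) : pJ w = v := by
  refine hB.eq_of_mem_WupJ hJ (hpJ w hw).1 hv ?_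
  simpa [mul_assoc] using mul_mem (hpJ w hw).2 (inv_mem h)

theorem longestElt_isLongestIn (hB : IsBase R Pos Δ) (hK : K ⊆ Δ) :
    IsLongestIn R Δ (WsubJ R K) (longestElt R Δ (WsubJ R K)) := by
  have hfin : (WsubJ R K : Set (V ≃ₗ[ℝ] V)).Finite :=
    (finite_weylGroup R).subset (hB.WsubJ_le_weylGroup hK)
  exact Classical.epsilon_spec (p := IsLongestIn R Δ (WsubJ R K))
    (Set.exists_max_image _ (len R Δ) hfin ⟨1, one_mem _⟩)

theorem longest_apply_simple_notMem_pos (hB : IsBase R Pos Δ) (hK : K ⊆ Δ)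
    (hv : IsLongestIn R Δ (WsubJ R K) v) (ha : a ∈ K) : v a ∉ Pos := fun h ↦
  (hB.len_lt_len_mul_refl (hB.WsubJ_le_weylGroup hK hv.1) (hK ha) h).not_ge
    (hv.2 _ (mul_mem hv.1 (refl_mem_WsubJ ha)))

theorem coeff_longest_apply_nonpos (hB : IsBase R Pos Δ) (hK : K ⊆ Δ)
    (hv : IsLongestIn R Δ (WsubJ R K) v) (hx : ∀ a ∈ K, 0 ≤ hB.coeff a x)
    (hx₀ : ∀ a ∉ K, hB.coeff a x = 0) (b : V) : hB.coeff b (v x) ≤ 0 := by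
  rw [← neg_nonneg]
  refine hB.map_nonneg (f := -hB.coeff b ∘ₗ v) fun a ha ↦ ?_
  by_cases haK : a ∈ K
  · refine mul_nonneg (hx a haK) (neg_nonneg.2 (hB.coeff_nonpos ?_
      (hB.longest_apply_simple_notMem_pos hK hv haK) b))
    exact apply_mem (hB.WsubJ_le_weylGroup hK hv.1) (hB.simple_mem ha)
  · rw [hx₀ a haK, zero_mul]

theorem longest_apply_notMem_pos (hB : IsBase R Pos Δ) (hK : K ⊆ Δ)
    (hv : IsLongestIn R Δ (WsubJ R K) v) (hβ : β ∈ Pos) (h : ∀ a ∉ K, hB.coeff a β = 0) :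
    v β ∉ Pos := by
  intro hpos
  have hle : hB.height (v β) ≤ 0 := by
    rw [height_apply]
    exact Finset.sum_nonpos fun b _ ↦
      hB.coeff_longest_apply_nonpos hK hv (fun a _ ↦ hB.coeff_nonneg hβ a) h b
  exact hle.not_gt (hB.height_pos hpos)

theorem longest_mul_longest_mem_WupJ (hB : IsBase R Pos Δ) (hJ : J ⊆ Δ)
    (hw : IsLongestIn R Δ (weylGroup R) w) (hv : IsLongestIn R Δ (WsubJ R J) v) :
    w * v ∈ WupJ R Pos J := by
  have hvW := hB.WsubJ_le_weylGroup hJ hv.1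
  refine ⟨mul_mem hw.1 hvW, fun a ha ↦ ?_⟩
  have hva := apply_mem hvW (hB.simple_mem (hJ ha))
  have hneg := hB.neg_mem_pos hva (hB.longest_apply_simple_notMem_pos hJ hv ha)
  rw [hB.weylGroup_eq_WsubJ] at hw
  by_contra h
  refine hB.longest_apply_notMem_pos subset_rfl hw hneg
    (fun b hb ↦ by rw [hB.coeff_of_notMem hb, LinearMap.zero_apply]) ?_
  rw [map_neg]
  exact hB.neg_mem_pos (apply_mem (hB.weylGroup_eq_WsubJ ▸ hw.1) hva) h

theorem isProjJ_refl_mul (hB : IsBase R Pos Δ) (hJ : J ⊆ Δ) {pJ : (V ≃ₗ[ℝ] V) → (V ≃ₗ[ℝ] V)}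
    (hpJ : IsProjJ R Pos J pJ) (hw : w ∈ weylGroup R) (ha : a ∈ Δ) (h : w⁻¹ a ∈ Pos) :
    pJ (R.refl a * w) = pJ w ∨ len R Δ (pJ w) < len R Δ (pJ (R.refl a * w)) := by
  have haΦ := hB.simple_mem ha
  have haw := mul_mem (refl_mem_weylGroup haΦ) hw
  obtain ⟨hx, hv⟩ := hpJ w hw
  generalize pJ w = x at hx hv ⊢
  by_cases hxJ : ∃ d ∈ J, x d = a
  · obtain ⟨d, hd, rfl⟩ := hxJ
    refine .inl (hB.isProjJ_apply_eq hJ hpJ haw hx ?_)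
    have hconj : x⁻¹ * (R.refl (x d) * w) = R.refl d * (x⁻¹ * w) := by
      rw [inv_mul_eq_iff_eq_mul, ← mul_assoc x, ← refl_apply_mul hx.1 (hB.simple_mem (hJ hd))]
      simp [mul_assoc]
    exact hconj ▸ mul_mem (refl_mem_WsubJ hd) hv
  · push Not at hxJ
    have hax : R.refl a * x ∈ WupJ R Pos J := ⟨mul_mem (refl_mem_weylGroup haΦ) hx.1,
      fun d hd ↦ hB.refl_simple_mem_pos ha (hx.2 d hd) (hxJ d hd)⟩
    have hproj : pJ (R.refl a * w) = R.refl a * x :=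
      hB.isProjJ_apply_eq hJ hpJ haw hax (by simpa [mul_assoc] using hv)
    rw [hproj]
    refine .inr (hB.len_lt_len_refl_mul hx.1 ha ?_)
    by_contra hneg
    have happly : (x⁻¹ * w) (w⁻¹ a) = x⁻¹ a := by simp
    have hpos := hB.apply_mem_pos_of_mem_WupJ hx
      (hB.neg_mem_pos (apply_mem (inv_mem hx.1) haΦ) hneg) fun b hb ↦ by
        rw [map_neg, ← happly, hB.coeff_apply_of_mem_WsubJ hJ hv hb,
          hB.coeff_eq_zero_of_apply_notMem_pos hJ hv h (happly ▸ hneg) hb, neg_zero]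
    have hxneg : x (-x⁻¹ a) = -a := by simp
    exact hB.neg_notMem_pos (hB.delta_sub ha) (hxneg ▸ hpos)

/-- The flux of a finite set `T` of group elements, as a functional on `V`: at a simple root `a`,
multiplication by `s_a` pairs off all terms of the sum but those of the `x ∈ T` with `s_a x ∉ T`. -/
noncomputable def flux (hB : IsBase R Pos Δ) (T : Finset (V ≃ₗ[ℝ] V)) : V →ₗ[ℝ] ℝ :=
  ∑ x ∈ T, hB.height ∘ₗ (x⁻¹ : V ≃ₗ[ℝ] V)

theorem flux_apply (hB : IsBase R Pos Δ) (T : Finset (V ≃ₗ[ℝ] V)) (y : V) :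
    hB.flux T y = ∑ x ∈ T, hB.height (x⁻¹ y) := by
  simp only [flux, LinearMap.sum_apply, LinearMap.comp_apply, LinearEquiv.coe_coe]

theorem flux_apply_of_mem_Phi (hB : IsBase R Pos Δ) (T : Finset (V ≃ₗ[ℝ] V)) (ha : a ∈ R.Phi) :
    hB.flux T a = ∑ x ∈ T with R.refl a * x ∉ T, hB.height (x⁻¹ a) := by
  have hneg : ∀ x : V ≃ₗ[ℝ] V, hB.height ((R.refl a * x)⁻¹ a) = -hB.height (x⁻¹ a) := fun x ↦ by
    rw [mul_inv_rev, refl_inv ha, LinearEquiv.mul_apply, refl_apply_self ha, map_neg, map_neg]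
  rw [flux_apply, ← Finset.sum_filter_add_sum_filter_not T fun x ↦ R.refl a * x ∈ T,
    add_eq_right]
  refine Finset.sum_involution (fun x _ ↦ R.refl a * x) (fun x _ ↦ by rw [hneg, add_neg_cancel])
    (fun x _ hx h ↦ hx ?_) (fun x hx ↦ ?_) fun x _ ↦ ?_
  · linarith [h ▸ hneg x]
  · rw [Finset.mem_filter] at hx ⊢
    exact ⟨hx.2, by rw [← mul_assoc, refl_mul_self ha, one_mul]; exact hx.1⟩
  · rw [← mul_assoc, refl_mul_self ha, one_mul]

theorem flux_apply_apply (hB : IsBase R Pos Δ) {T : Finset (V ≃ₗ[ℝ] V)}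
    {H : Subgroup (V ≃ₗ[ℝ] V)} (hT : ∀ u ∈ H, ∀ x ∈ T, u * x ∈ T) {u : V ≃ₗ[ℝ] V} (hu : u ∈ H)
    (y : V) : hB.flux T (u y) = hB.flux T y := by
  rw [flux_apply, flux_apply]
  refine Finset.sum_bij' (fun x _ ↦ u⁻¹ * x) (fun x _ ↦ u * x) (hT _ (inv_mem hu)) (hT u hu)
    (fun x _ ↦ mul_inv_cancel_left u x) (fun x _ ↦ inv_mul_cancel_left u x) fun x _ ↦ ?_
  simp

section Circulation

variable {T : Finset (V ≃ₗ[ℝ] V)}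

theorem height_inv_apply_neg (hB : IsBase R Pos Δ) (hTW : ∀ x ∈ T, x ∈ weylGroup R)
    (hT : ∀ x ∈ T, ∀ a ∈ Δ, x⁻¹ a ∈ Pos → R.refl a * x ∈ T) (ha : a ∈ Δ) (hw : w ∈ T)
    (h : R.refl a * w ∉ T) : hB.height (w⁻¹ a) < 0 :=
  hB.height_neg (apply_mem (inv_mem (hTW w hw)) (hB.simple_mem ha)) fun hpos ↦
    h (hT w hw a ha hpos)

theorem flux_simple_nonpos (hB : IsBase R Pos Δ) (hTW : ∀ x ∈ T, x ∈ weylGroup R)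
    (hT : ∀ x ∈ T, ∀ a ∈ Δ, x⁻¹ a ∈ Pos → R.refl a * x ∈ T) (ha : a ∈ Δ) :
    hB.flux T a ≤ 0 := by
  rw [hB.flux_apply_of_mem_Phi T (hB.simple_mem ha)]
  refine Finset.sum_nonpos fun x hx ↦ ?_
  rw [Finset.mem_filter] at hx
  exact (hB.height_inv_apply_neg hTW hT ha hx.1 hx.2).le

theorem flux_simple_neg (hB : IsBase R Pos Δ) (hTW : ∀ x ∈ T, x ∈ weylGroup R)
    (hT : ∀ x ∈ T, ∀ a ∈ Δ, x⁻¹ a ∈ Pos → R.refl a * x ∈ T) (ha : a ∈ Δ) (hw : w ∈ T)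
    (h : R.refl a * w ∉ T) : hB.flux T a < 0 := by
  rw [hB.flux_apply_of_mem_Phi T (hB.simple_mem ha)]
  refine Finset.sum_neg (fun x hx ↦ ?_) ⟨w, Finset.mem_filter.2 ⟨hw, h⟩⟩
  rw [Finset.mem_filter] at hx
  exact hB.height_inv_apply_neg hTW hT ha hx.1 hx.2

theorem refl_mul_mem_of_apply_eq_neg_simple (hB : IsBase R Pos Δ)
    (hTW : ∀ x ∈ T, x ∈ weylGroup R)
    (hT : ∀ x ∈ T, ∀ a ∈ Δ, x⁻¹ a ∈ Pos → R.refl a * x ∈ T) {H : Subgroup (V ≃ₗ[ℝ] V)}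
    (hTH : ∀ u ∈ H, ∀ x ∈ T, u * x ∈ T) {u : V ≃ₗ[ℝ] V} (hu : u ∈ H) {θ : V} (ha : a ∈ Δ)
    (hθ : u θ = -a) (hnonneg : ∀ d ∈ Δ, 0 ≤ hB.coeff d θ) (hb : b ∈ Δ) (hbθ : 0 < hB.coeff b θ)
    (hw : w ∈ T) : R.refl b * w ∈ T := by
  by_contra h
  have hθ_nonneg : 0 ≤ hB.flux T θ := by
    rw [← hB.flux_apply_apply hTH hu, hθ, map_neg, neg_nonneg]
    exact hB.flux_simple_nonpos hTW hT ha
  have hθ_neg : hB.flux T θ < 0 := by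
    rw [hB.map_eq_sum_coeff]
    refine Finset.sum_neg' (fun d hd ↦ ?_) ⟨b, hB.finite_simple.mem_toFinset.2 hb,
      mul_neg_of_pos_of_neg hbθ (hB.flux_simple_neg hTW hT hb hw h)⟩
    rw [Set.Finite.mem_toFinset] at hd
    exact mul_nonpos_of_nonneg_of_nonpos (hnonneg d hd) (hB.flux_simple_nonpos hTW hT hd)
  exact hθ_neg.not_ge hθ_nonneg

end Circulation

theorem mem_of_refl_mul_mem (hB : IsBase R Pos Δ) {T : Set (V ≃ₗ[ℝ] V)}
    (hT : ∀ a ∈ Δ, ∀ x ∈ T, R.refl a * x ∈ T) (hv : v ∈ T) (hvW : v ∈ weylGroup R)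
    (hw : w ∈ weylGroup R) : w ∈ T := by
  have hmul : ∀ y ∈ WsubJ R Δ, y * v ∈ T := fun y hy ↦ by
    induction hy using WsubJ_induction hB.simple_subset with
    | one => rwa [one_mul]
    | refl_mul a ha y _ ih =>
      rw [mul_assoc]
      exact hT a ha _ ih
  rw [← inv_mul_cancel_right w v]
  exact hmul _ (hB.weylGroup_eq_WsubJ ▸ mul_mem hw (inv_mem hvW))

end IsBase

/-- The moves on `W`, before projection to `W^J`: left multiplication by an element of `H`, or by a
simple reflection `s_a` increasing the length, which is expressed by `w⁻¹ a` being positive. -/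
def Step (R : RootSystemData V) (Pos Δ : Set V) (H : Subgroup (V ≃ₗ[ℝ] V))
    (w w' : V ≃ₗ[ℝ] V) : Prop :=
  (∃ u ∈ H, w' = u * w) ∨ ∃ a ∈ Δ, w⁻¹ a ∈ Pos ∧ w' = R.refl a * w

theorem exists_seq_of_reflTransGen {X : Type*} {r : X → X → Prop} {x y : X}
    (h : Relation.ReflTransGen r x y) :
    ∃ (t : ℕ) (ws : ℕ → X), ws 0 = x ∧ ws t = y ∧ ∀ i < t, r (ws i) (ws (i + 1)) := by
  induction h using Relation.ReflTransGen.head_induction_on with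
  | refl => exact ⟨0, fun _ ↦ y, rfl, rfl, fun i hi ↦ absurd hi i.not_lt_zero⟩
  | @head a b hab _ ih =>
    obtain ⟨t, ws, h0, ht, hstep⟩ := ih
    refine ⟨t + 1, fun | 0 => a | n + 1 => ws n, rfl, ht, fun i hi ↦ ?_⟩
    cases i with
    | zero => simpa only [h0] using hab
    | succ i => exact hstep i (Nat.lt_of_succ_lt_succ hi)

namespace IsBase

open RootSystemData

variable {H : Subgroup (V ≃ₗ[ℝ] V)} {J : Set V} {w w' : V ≃ₗ[ℝ] V}

theorem mem_weylGroup_of_step (hB : IsBase R Pos Δ) (hH : H ≤ weylGroup R)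
    (hw : w ∈ weylGroup R) (h : Step R Pos Δ H w w') : w' ∈ weylGroup R := by
  rcases h with ⟨u, hu, rfl⟩ | ⟨a, ha, -, rfl⟩
  · exact mul_mem (hH hu) hw
  · exact mul_mem (refl_mem_weylGroup (hB.simple_mem ha)) hw

theorem isProjJ_step (hB : IsBase R Pos Δ) (hJ : J ⊆ Δ) {pJ : (V ≃ₗ[ℝ] V) → (V ≃ₗ[ℝ] V)}
    (hpJ : IsProjJ R Pos J pJ) (hw : w ∈ weylGroup R) (h : Step R Pos Δ H w w') :
    (∃ u ∈ H, pJ w' = pJ (u * w)) ∨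
      (len R Δ (pJ w) < len R Δ (pJ w') ∧ ∃ s ∈ refls R Δ, pJ w' = pJ (s * w)) := by
  rcases h with ⟨u, hu, rfl⟩ | ⟨a, ha, hpos, rfl⟩
  · exact .inl ⟨u, hu, rfl⟩
  · rcases hB.isProjJ_refl_mul hJ hpJ hw ha hpos with heq | hlt
    · exact .inl ⟨1, one_mem H, by rw [heq, one_mul]⟩
    · exact .inr ⟨hlt, R.refl a, ⟨a, ha, rfl⟩, rfl⟩

theorem reflTransGen_step (hB : IsBase R Pos Δ) (hH : H ≤ weylGroup R)
    (hneg : ∀ b ∈ Δ, ∃ θ, (∀ d ∈ Δ, 0 ≤ hB.coeff d θ) ∧ 0 < hB.coeff b θ ∧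
      ∃ u ∈ H, ∃ a ∈ Δ, u θ = -a)
    (hw : w ∈ weylGroup R) (hw' : w' ∈ weylGroup R) :
    Relation.ReflTransGen (Step R Pos Δ H) w w' := by
  have hreach : ∀ x, Relation.ReflTransGen (Step R Pos Δ H) w x → x ∈ weylGroup R := fun x hx ↦ by
    induction hx with
    | refl => exact hw
    | tail _ hstep ih => exact hB.mem_weylGroup_of_step hH ih hstep
  have hfin : {x | Relation.ReflTransGen (Step R Pos Δ H) w x}.Finite :=
    (finite_weylGroup R).subset hreach
  refine hB.mem_of_refl_mul_mem (T := {x | Relation.ReflTransGen (Step R Pos Δ H) w x})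
    (fun b hb x hx ↦ ?_) .refl hw hw'
  obtain ⟨θ, hnonneg, hbθ, u, hu, a, ha, hθ⟩ := hneg b hb
  refine hfin.mem_toFinset.1 (hB.refl_mul_mem_of_apply_eq_neg_simple (H := H) ?_ ?_ ?_ hu ha hθ
    hnonneg hb hbθ (hfin.mem_toFinset.2 hx)) <;> simp only [Set.Finite.mem_toFinset]
  · exact hreach
  · exact fun y hy a ha hpos ↦ hy.tail (.inr ⟨a, ha, hpos, rfl⟩)
  · exact fun u hu y hy ↦ hy.tail (.inl ⟨u, hu, rfl⟩)

end IsBase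

section Factors

open RootSystemData

variable {ι : Type} {parts : ι → Set V} {hr : ι → V} {hco : ι → (V →₀ ℕ)} {c : ι}
  {a b β η : V} {K : Set V} {v : V ≃ₗ[ℝ] V}

theorem IsFactorDecomp.subset (hF : IsFactorDecomp R Δ parts) (c : ι) : parts c ⊆ Δ :=
  hF.union_eq ▸ Set.subset_iUnion parts c

namespace IsBase

theorem exists_intCast_coeff_eq (hB : IsBase R Pos Δ) (hβ : β ∈ R.Phi) (a : V) :
    ∃ n : ℤ, hB.coeff a β = n := by
  rcases hB.mem_or_neg β hβ with h | h
  · obtain ⟨n, hn⟩ := hB.exists_nat_coeff_eq h a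
    exact ⟨n, by simp [hn]⟩
  · obtain ⟨n, hn⟩ := hB.exists_nat_coeff_eq h a
    exact ⟨-n, by simp [← hn]⟩

theorem mem_PhiFactor_iff (hB : IsBase R Pos Δ) (hc : parts c ⊆ Δ) :
    β ∈ PhiFactor R parts c ↔ β ∈ R.Phi ∧ ∀ b ∉ parts c, hB.coeff b β = 0 := by
  refine and_congr_right fun hβ ↦ ⟨?_, fun h ↦ ?_⟩
  · rintro ⟨q, hq, rfl⟩ b hb
    rw [hB.coeff_int (hq.trans hc), Finsupp.notMem_support_iff.1 fun h ↦ hb (hq h), Int.cast_zero]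
  · choose n hn using hB.exists_intCast_coeff_eq hβ
    have hn₀ : ∀ b ∉ parts c, n b = 0 := fun b hb ↦
      Int.cast_eq_zero.1 ((hn b).symm.trans (h b hb))
    refine ⟨Finsupp.onFinset hB.finite_simple.toFinset n fun b hb ↦
      hB.finite_simple.mem_toFinset.2 (hc (not_imp_comm.1 (hn₀ b) hb)), fun b hb ↦ ?_, ?_⟩
    · exact not_imp_comm.1 (hn₀ b) (by simpa using hb)
    · rw [Finsupp.onFinset_sum _ fun b ↦ by simp]
      simp only [← hn, hB.sum_coeff_smul]

theorem simple_mem_PhiFactor (hB : IsBase R Pos Δ) (hc : parts c ⊆ Δ) (ha : a ∈ parts c) :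
    a ∈ PhiFactor R parts c :=
  (hB.mem_PhiFactor_iff hc).2 ⟨hB.simple_mem (hc ha), fun _ hb ↦
    hB.coeff_of_ne (hc ha) (ne_of_mem_of_not_mem ha hb)⟩

theorem neg_mem_PhiFactor (hB : IsBase R Pos Δ) (hc : parts c ⊆ Δ)
    (hβ : β ∈ PhiFactor R parts c) : -β ∈ PhiFactor R parts c := by
  rw [hB.mem_PhiFactor_iff hc] at hβ ⊢
  exact ⟨neg_mem hβ.1, fun b hb ↦ by rw [map_neg, hβ.2 b hb, neg_zero]⟩

theorem apply_mem_PhiFactor (hB : IsBase R Pos Δ) (hc : parts c ⊆ Δ)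
    (hv : v ∈ WsubJ R (parts c)) (hβ : β ∈ PhiFactor R parts c) : v β ∈ PhiFactor R parts c := by
  rw [hB.mem_PhiFactor_iff hc] at hβ ⊢
  exact ⟨apply_mem (hB.WsubJ_le_weylGroup hc hv) hβ.1, fun b hb ↦ by
    rw [hB.coeff_apply_of_mem_WsubJ hc hv hb, hβ.2 b hb]⟩

theorem eq_of_forall_coeff_eq (hB : IsBase R Pos Δ) (h : ∀ b, hB.coeff b β = hB.coeff b η) :
    β = η := by
  rw [← hB.sum_coeff_smul β, ← hB.sum_coeff_smul η]
  simp only [h]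

end IsBase

namespace IsHighestRootData

theorem coeff_highest (hH : IsHighestRootData R Pos parts hr hco) (hB : IsBase R Pos Δ)
    (hc : parts c ⊆ Δ) (b : V) : hB.coeff b (hr c) = hco c b := by
  rw [hH.coeff_eq c, hB.coeff_nat ((hH.coeff_supp c).trans hc)]

theorem coeff_le_highest (hH : IsHighestRootData R Pos parts hr hco) (hB : IsBase R Pos Δ)
    (hc : parts c ⊆ Δ) (hβ : β ∈ PhiFactor R parts c) (b : V) :
    hB.coeff b β ≤ hB.coeff b (hr c) := by
  obtain ⟨q, hq, h⟩ := hH.highest c β hβ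
  rw [← sub_nonneg, ← map_sub, h, hB.coeff_nat (hq.trans hc)]
  exact Nat.cast_nonneg _

theorem one_le_coeff_highest (hH : IsHighestRootData R Pos parts hr hco) (hB : IsBase R Pos Δ)
    (hc : parts c ⊆ Δ) (hb : b ∈ parts c) : 1 ≤ hB.coeff b (hr c) := by
  rw [← hB.coeff_self (hc hb)]
  exact hH.coeff_le_highest hB hc (hB.simple_mem_PhiFactor hc hb) b

theorem coeff_longest_apply_highest_le (hH : IsHighestRootData R Pos parts hr hco)
    (hB : IsBase R Pos Δ) (hc : parts c ⊆ Δ) (hK : K ⊆ parts c)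
    (hv : IsLongestIn R Δ (WsubJ R K) v) (hη : η ∈ PhiFactor R parts c)
    (h : ∀ d ∉ K, hB.coeff d η = hB.coeff d (hr c)) (b : V) :
    hB.coeff b (v (hr c)) ≤ hB.coeff b η := by
  have hvη := hB.apply_mem_PhiFactor hc (WsubJ_mono hK (inv_mem hv.1)) hη
  have hle := hB.coeff_longest_apply_nonpos (hK.trans hc) hv (x := hr c - v⁻¹ η)
    (fun d _ ↦ by rw [map_sub, sub_nonneg]; exact hH.coeff_le_highest hB hc hvη d)
    (fun d hd ↦ by rw [map_sub, hB.coeff_apply_of_mem_WsubJ (hK.trans hc) (inv_mem hv.1) hd,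
      h d hd, sub_self]) b
  simpa using hle

theorem longest_apply_highest (hH : IsHighestRootData R Pos parts hr hco) (hB : IsBase R Pos Δ)
    (hc : parts c ⊆ Δ) (hv : IsLongestIn R Δ (WsubJ R (parts c)) v) : v (hr c) = -hr c := by
  have hθ := hH.mem_factor c
  have hnegθ := hB.neg_mem_PhiFactor hc hθ
  refine hB.eq_of_forall_coeff_eq fun b ↦ le_antisymm ?_ ?_
  · refine hH.coeff_longest_apply_highest_le hB hc subset_rfl hv hnegθ (fun d hd ↦ ?_) b
    rw [((hB.mem_PhiFactor_iff hc).1 hnegθ).2 d hd, ((hB.mem_PhiFactor_iff hc).1 hθ).2 d hd]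
  · have hle := hH.coeff_le_highest hB hc
      (hB.neg_mem_PhiFactor hc (hB.apply_mem_PhiFactor hc hv.1 hθ)) b
    rw [map_neg] at hle ⊢
    exact neg_le.1 hle

theorem longest_diff_singleton_apply_highest (hH : IsHighestRootData R Pos parts hr hco)
    (hB : IsBase R Pos Δ) (hc : parts c ⊆ Δ) (ha : a ∈ parts c) (hca : hco c a = 1)
    (hv : IsLongestIn R Δ (WsubJ R (parts c \ {a})) v) : v (hr c) = a := by
  have hθ := hH.mem_factor c
  have haθ : hB.coeff a (hr c) = 1 := by rw [hH.coeff_highest hB hc, hca, Nat.cast_one]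
  have hva : hB.coeff a (v (hr c)) = 1 := by
    rw [hB.coeff_apply_of_mem_WsubJ (Set.sdiff_subset.trans hc) hv.1 fun h ↦ h.2 rfl, haθ]
  have hvθ := hB.apply_mem_PhiFactor hc (WsubJ_mono Set.sdiff_subset hv.1) hθ
  have hpos : v (hr c) ∈ Pos := hB.mem_pos_of_coeff_pos hvθ.1 (hva ▸ one_pos)
  refine hB.eq_of_coeff_eq_zero (hc ha) hpos fun b hba ↦
    le_antisymm ?_ (hB.coeff_nonneg hpos b)
  rw [← hB.coeff_of_ne (hc ha) hba.symm]
  refine hH.coeff_longest_apply_highest_le hB hc Set.sdiff_subset hv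
    (hB.simple_mem_PhiFactor hc ha) (fun d hd ↦ ?_) b
  by_cases hda : d = a
  · rw [hda, hB.coeff_self (hc ha), haθ]
  · have hdc : d ∉ parts c := fun h ↦ hd ⟨h, hda⟩
    rw [hB.coeff_of_ne (hc ha) (Ne.symm hda), ((hB.mem_PhiFactor_iff hc).1 hθ).2 d hdc]

theorem exists_mem_WOmega_apply_eq_neg (hH : IsHighestRootData R Pos parts hr hco)
    (hB : IsBase R Pos Δ) (hc : parts c ⊆ Δ) (ha : a ∈ parts c) (hca : hco c a = 1) :
    ∃ u ∈ WOmega R Δ parts hco, u (hr c) = -a := by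
  refine ⟨_, Subgroup.subset_closure (Set.mem_iUnion.2 ⟨c, .inr ⟨a, ha, hca, rfl⟩⟩), ?_⟩
  rw [LinearEquiv.mul_apply, hH.longest_apply_highest hB hc (hB.longestElt_isLongestIn hc), map_neg,
    hH.longest_diff_singleton_apply_highest hB hc ha hca
      (hB.longestElt_isLongestIn (Set.sdiff_subset.trans hc))]

end IsHighestRootData

theorem IsBase.WOmega_le_weylGroup (hB : IsBase R Pos Δ) (hc : ∀ c, parts c ⊆ Δ) :
    WOmega R Δ parts hco ≤ weylGroup R := by
  have hlongest : ∀ K ⊆ Δ, longestElt R Δ (WsubJ R K) ∈ weylGroup R := fun K hK ↦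
    hB.WsubJ_le_weylGroup hK (hB.longestElt_isLongestIn hK).1
  refine (Subgroup.closure_le _).2 (Set.iUnion_subset fun c ↦ ?_)
  rintro _ (rfl | ⟨a, -, -, rfl⟩)
  · exact one_mem _
  · exact mul_mem (hlongest _ (Set.sdiff_subset.trans (hc c))) (hlongest _ (hc c))

/-- A functional is minuscule on a set of roots if it takes only the values `0` and `±1` there, and
does not vanish on it; the fundamental coweights with this property are those at the simple roots of
coefficient `1` in the highest root. -/
def IsMinusculeOn (Φc : Set V) (f : V →ₗ[ℝ] ℝ) : Prop :=
  (∀ β ∈ Φc, f β = 0 ∨ f β = 1 ∨ f β = -1) ∧ ∃ β ∈ Φc, f β ≠ 0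

theorem IsBase.exists_dominant_isMinusculeOn (hB : IsBase R Pos Δ) (hc : parts c ⊆ Δ)
    {f : V →ₗ[ℝ] ℝ} (hf : IsMinusculeOn (PhiFactor R parts c) f) :
    ∃ g, IsMinusculeOn (PhiFactor R parts c) g ∧ ∀ a ∈ parts c, 0 ≤ g a := by
  obtain ⟨w, hw, hdom⟩ := hB.exists_dominant hc f
  obtain ⟨hval, β, hβ, hfβ⟩ := hf
  refine ⟨f ∘ₗ (w : V →ₗ[ℝ] V), ⟨fun γ hγ ↦ hval _ (hB.apply_mem_PhiFactor hc hw hγ), w⁻¹ β,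
    hB.apply_mem_PhiFactor hc (inv_mem hw) hβ, ?_⟩, hdom⟩
  simpa using hfβ

theorem IsBase.exists_simple_apply_eq_one (hB : IsBase R Pos Δ) (hc : parts c ⊆ Δ)
    {f : V →ₗ[ℝ] ℝ} (hf : IsMinusculeOn (PhiFactor R parts c) f)
    (hdom : ∀ a ∈ parts c, 0 ≤ f a) : ∃ a ∈ parts c, f a = 1 := by
  obtain ⟨hval, β, hβ, hfβ⟩ := hf
  obtain ⟨a, ha, hfa⟩ : ∃ a ∈ parts c, f a ≠ 0 := by
    contrapose! hfβ
    rw [hB.map_eq_sum_coeff]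
    refine Finset.sum_eq_zero fun b _ ↦ ?_
    by_cases hb : b ∈ parts c
    · rw [hfβ b hb, mul_zero]
    · rw [((hB.mem_PhiFactor_iff hc).1 hβ).2 b hb, zero_mul]
  refine ⟨a, ha, ?_⟩
  rcases hval a (hB.simple_mem_PhiFactor hc ha) with h | h | h
  · exact absurd h hfa
  · exact h
  · linarith [hdom a ha]

theorem IsHighestRootData.exists_hco_eq_one (hH : IsHighestRootData R Pos parts hr hco)
    (hB : IsBase R Pos Δ) (hc : parts c ⊆ Δ) {f : V →ₗ[ℝ] ℝ}
    (hf : IsMinusculeOn (PhiFactor R parts c) f) : ∃ a ∈ parts c, hco c a = 1 := by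
  obtain ⟨g, hg, hdom⟩ := hB.exists_dominant_isMinusculeOn hc hf
  obtain ⟨a, ha, hga⟩ := hB.exists_simple_apply_eq_one hc hg hdom
  have hle : 0 ≤ g (hr c - hB.coeff a (hr c) • a) := by
    refine hB.map_nonneg fun b _ ↦ ?_
    rw [map_sub, map_smul, hB.coeff_simple (hc ha)]
    split_ifs with hab
    · simp [hab]
    · by_cases hb : b ∈ parts c
      · simpa using mul_nonneg (hB.coeff_nonneg (hH.mem_pos c) b) (hdom b hb)
      · simp [((hB.mem_PhiFactor_iff hc).1 (hH.mem_factor c)).2 b hb]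
  have hcoeff : hB.coeff a (hr c) ≤ 1 := by
    rw [map_sub, map_smul, hga, smul_eq_mul, mul_one] at hle
    rcases hg.1 _ (hH.mem_factor c) with h | h | h <;> linarith
  have hone := hcoeff.antisymm (hH.one_le_coeff_highest hB hc ha)
  rw [hH.coeff_highest hB hc] at hone
  exact ⟨a, ha, mod_cast hone⟩

end Factors

section Classical

theorem IsMinusculeOn.exists_of_factorIso {k : ℕ} {Φc : Set V} {Ψ : Set (Fin k → ℝ)}
    (h : factorIso R Φc Ψ) {κ : Type*} (s : Finset κ) (y : κ → Fin k → ℝ) (hy : ∀ i ∈ s, y i ∈ Ψ)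
    (r : ℝ) (hval : ∀ x ∈ Ψ, r * ∑ i ∈ s, pairStd (y i) x = 0 ∨
      r * ∑ i ∈ s, pairStd (y i) x = 1 ∨ r * ∑ i ∈ s, pairStd (y i) x = -1)
    (hne : ∃ x ∈ Ψ, r * ∑ i ∈ s, pairStd (y i) x ≠ 0) : ∃ f, IsMinusculeOn Φc f := by
  obtain ⟨φ, hφ, hpair⟩ := h
  have hψ := hφ.surjOn.rightInvOn_invFunOn
  have hψmem := hφ.surjOn.mapsTo_invFunOn
  set ψ := Function.invFunOn φ Φc
  have hf : ∀ β ∈ Φc, (r • ∑ i ∈ s, R.pairing (ψ (y i))) β = r * ∑ i ∈ s, pairStd (y i) (φ β) := by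
    intro β hβ
    rw [LinearMap.smul_apply, LinearMap.sum_apply, smul_eq_mul]
    congr 1
    exact Finset.sum_congr rfl fun i hi ↦ by
      rw [← hpair _ (hψmem (hy i hi)) _ hβ, hψ (hy i hi)]
  obtain ⟨x, hx, hxne⟩ := hne
  refine ⟨r • ∑ i ∈ s, R.pairing (ψ (y i)), fun β hβ ↦ ?_, ψ x, hψmem hx, ?_⟩
  · rw [hf β hβ]
    exact hval _ (hφ.mapsTo hβ)
  · rwa [hf _ (hψmem hx), hψ hx]

variable {k m : ℕ} {i j : Fin k}

theorem eVec_self (i : Fin k) : eVec i i = 1 := if_pos rfl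

theorem eVec_of_ne (h : i ≠ j) : eVec i j = 0 := if_neg h.symm

theorem sum_eVec_mul (i : Fin k) (x : Fin k → ℝ) : ∑ l, eVec i l * x l = x i := by
  simp [eVec]

theorem sum_eVec (i : Fin k) : ∑ l, eVec i l = 1 := by
  simp [eVec]

theorem pairStd_eVec_sub (h : i ≠ j) (x : Fin k → ℝ) :
    pairStd (eVec i - eVec j) x = x i - x j := by
  simp only [pairStd, Pi.sub_apply, sub_mul, Finset.sum_sub_distrib, sum_eVec_mul, eVec_self,
    eVec_of_ne h, eVec_of_ne h.symm]
  ring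

theorem pairStd_eVec_add (h : i ≠ j) (x : Fin k → ℝ) :
    pairStd (eVec i + eVec j) x = x i + x j := by
  simp only [pairStd, Pi.add_apply, add_mul, Finset.sum_add_distrib, sum_eVec_mul, eVec_self,
    eVec_of_ne h, eVec_of_ne h.symm]
  ring

theorem pairStd_eVec (i : Fin k) (x : Fin k → ℝ) : pairStd (eVec i) x = 2 * x i := by
  simp only [pairStd, sum_eVec_mul, eVec_self, div_one]

theorem pairStd_two_smul_eVec (i : Fin k) (x : Fin k → ℝ) :
    pairStd ((2 : ℝ) • eVec i) x = x i := by
  simp only [pairStd, Pi.smul_apply, smul_eq_mul, mul_assoc, ← Finset.mul_sum, sum_eVec_mul,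
    eVec_self]
  ring

theorem stdB_apply {x : Fin m → ℝ} (hx : x ∈ stdB m) (l : Fin m) :
    x l = 0 ∨ x l = 1 ∨ x l = -1 := by
  rcases hx with ⟨i, j, hij, rfl | rfl | rfl | rfl⟩ | ⟨i, rfl | rfl⟩ <;>
    simp only [Pi.add_apply, Pi.sub_apply, Pi.neg_apply, eVec] <;> grind

theorem stdA_apply {x : Fin (m + 1) → ℝ} (hx : x ∈ stdA m) (l : Fin (m + 1)) :
    x l = 0 ∨ x l = 1 ∨ x l = -1 := by
  obtain ⟨i, j, hij, rfl⟩ := hx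
  exact stdB_apply (.inl ⟨i, j, hij, .inr (.inl rfl)⟩) l

theorem sum_stdA {x : Fin (m + 1) → ℝ} (hx : x ∈ stdA m) : ∑ l, x l = 0 := by
  obtain ⟨i, j, -, rfl⟩ := hx
  simp [Finset.sum_sub_distrib, sum_eVec]

theorem half_sum_stdC {x : Fin m → ℝ} (hx : x ∈ stdC m) :
    2⁻¹ * ∑ l, x l = 0 ∨ 2⁻¹ * ∑ l, x l = 1 ∨ 2⁻¹ * ∑ l, x l = -1 := by
  rcases hx with ⟨i, j, -, rfl | rfl | rfl | rfl⟩ | ⟨i, rfl | rfl⟩ <;>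
    simp only [Pi.add_apply, Pi.sub_apply, Pi.neg_apply, Pi.smul_apply, smul_eq_mul,
      Finset.sum_add_distrib, Finset.sum_sub_distrib, Finset.sum_neg_distrib, ← Finset.mul_sum,
      sum_eVec] <;> norm_num

variable {Φc : Set V}

theorem exists_isMinusculeOn_of_stdA (hne : Φc.Nonempty) (h : factorIso R Φc (stdA m)) :
    ∃ f, IsMinusculeOn Φc f := by
  obtain ⟨i, j, hij, -⟩ := h.choose_spec.1.mapsTo hne.some_mem
  have hval : ∀ x ∈ stdA m,
      (m + 1 : ℝ)⁻¹ * ∑ l ∈ Finset.univ.erase i, pairStd (eVec i - eVec l) x = x i := by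
    intro x hx
    have hsum : ∑ l ∈ Finset.univ.erase i, pairStd (eVec i - eVec l) x = (m + 1) * x i := by
      rw [Finset.sum_congr rfl fun l hl ↦ pairStd_eVec_sub (Finset.ne_of_mem_erase hl).symm x,
        Finset.sum_erase _ (sub_self _), Finset.sum_sub_distrib, sum_stdA hx]
      simp
    rw [hsum, inv_mul_cancel_left₀ (by positivity)]
  refine IsMinusculeOn.exists_of_factorIso h (Finset.univ.erase i) (fun l ↦ eVec i - eVec l)
    (fun l hl ↦ ⟨i, l, (Finset.ne_of_mem_erase hl).symm, rfl⟩) (m + 1 : ℝ)⁻¹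
    (fun x hx ↦ hval x hx ▸ stdA_apply hx i) ⟨eVec i - eVec j, ⟨i, j, hij, rfl⟩, ?_⟩
  rw [hval _ ⟨i, j, hij, rfl⟩]
  simp [eVec_self, eVec_of_ne hij.symm]

theorem exists_isMinusculeOn_of_stdB (hne : Φc.Nonempty) (h : factorIso R Φc (stdB m)) :
    ∃ f, IsMinusculeOn Φc f := by
  obtain ⟨i⟩ : Nonempty (Fin m) := by
    rcases h.choose_spec.1.mapsTo hne.some_mem with ⟨i, -⟩ | ⟨i, -⟩ <;> exact ⟨i⟩
  have hi : eVec i ∈ stdB m := .inr ⟨i, .inl rfl⟩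
  have hval : ∀ x, 2⁻¹ * ∑ _l : Unit, pairStd (eVec i) x = x i := fun x ↦ by simp [pairStd_eVec]
  refine IsMinusculeOn.exists_of_factorIso h Finset.univ (fun _ : Unit ↦ eVec i) (fun _ _ ↦ hi) 2⁻¹
    (fun x hx ↦ (hval x).symm ▸ stdB_apply hx i) ⟨eVec i, hi, ?_⟩
  rw [hval, eVec_self]
  exact one_ne_zero

theorem exists_isMinusculeOn_of_stdC (hne : Φc.Nonempty) (h : factorIso R Φc (stdC m)) :
    ∃ f, IsMinusculeOn Φc f := by
  obtain ⟨i⟩ : Nonempty (Fin m) := by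
    rcases h.choose_spec.1.mapsTo hne.some_mem with ⟨i, -⟩ | ⟨i, -⟩ <;> exact ⟨i⟩
  have hmem : ∀ l : Fin m, (2 : ℝ) • eVec l ∈ stdC m := fun l ↦ .inr ⟨l, .inl rfl⟩
  refine IsMinusculeOn.exists_of_factorIso h Finset.univ (fun l ↦ (2 : ℝ) • eVec l)
    (fun l _ ↦ hmem l) 2⁻¹ ?_ ⟨(2 : ℝ) • eVec i, hmem i, ?_⟩ <;>
    simp only [pairStd_two_smul_eVec]
  · exact fun x ↦ half_sum_stdC
  · simp [← Finset.mul_sum, sum_eVec]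

theorem exists_isMinusculeOn_of_stdD (hne : Φc.Nonempty) (h : factorIso R Φc (stdD m)) :
    ∃ f, IsMinusculeOn Φc f := by
  obtain ⟨i, j, hij, -⟩ := h.choose_spec.1.mapsTo hne.some_mem
  have hadd : eVec i + eVec j ∈ stdD m := ⟨i, j, hij, .inl rfl⟩
  have hsub : eVec i - eVec j ∈ stdD m := ⟨i, j, hij, .inr (.inl rfl)⟩
  have hval : ∀ x, 2⁻¹ * ∑ l, pairStd (![eVec i + eVec j, eVec i - eVec j] l) x = x i := fun x ↦ by
    simp only [Fin.sum_univ_two, Matrix.cons_val_zero, Matrix.cons_val_one, pairStd_eVec_add hij,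
      pairStd_eVec_sub hij]
    ring
  refine IsMinusculeOn.exists_of_factorIso h Finset.univ ![eVec i + eVec j, eVec i - eVec j]
    (fun l _ ↦ ?_) 2⁻¹ (fun x hx ↦ (hval x).symm ▸ stdB_apply (.inl hx) i)
    ⟨eVec i + eVec j, hadd, ?_⟩
  · fin_cases l
    exacts [hadd, hsub]
  · rw [hval]
    simp [eVec_self, eVec_of_ne hij.symm]

theorem NoExceptionalFactor.exists_isMinusculeOn {ι : Type} {parts : ι → Set V}
    (h : NoExceptionalFactor R parts) {c : ι} (hne : (PhiFactor R parts c).Nonempty) :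
    ∃ f, IsMinusculeOn (PhiFactor R parts c) f := by
  rcases h c with ⟨m, h⟩ | ⟨m, h⟩ | ⟨m, h⟩ | ⟨m, h⟩
  · exact exists_isMinusculeOn_of_stdA hne h
  · exact exists_isMinusculeOn_of_stdB hne h
  · exact exists_isMinusculeOn_of_stdC hne h
  · exact exists_isMinusculeOn_of_stdD hne h

theorem IsHighestRootData.exists_hco_eq_one_of_noExceptionalFactor {ι : Type} {parts : ι → Set V}
    {hr : ι → V} {hco : ι → (V →₀ ℕ)} (hH : IsHighestRootData R Pos parts hr hco)
    (hB : IsBase R Pos Δ) (hF : IsFactorDecomp R Δ parts) (h : NoExceptionalFactor R parts)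
    (c : ι) : ∃ a ∈ parts c, hco c a = 1 :=
  let ⟨_, hf⟩ := h.exists_isMinusculeOn ⟨_, hH.mem_factor c⟩
  hH.exists_hco_eq_one hB (hF.subset c) hf

end Classical

theorem IsBase.reflTransGen_step_WOmega {ι : Type} {parts : ι → Set V} {hr : ι → V}
    {hco : ι → (V →₀ ℕ)} (hB : IsBase R Pos Δ) (hF : IsFactorDecomp R Δ parts)
    (hH : IsHighestRootData R Pos parts hr hco) (hmin : ∀ c, ∃ a ∈ parts c, hco c a = 1)
    {w w' : V ≃ₗ[ℝ] V} (hw : w ∈ weylGroup R) (hw' : w' ∈ weylGroup R) :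
    Relation.ReflTransGen (Step R Pos Δ (WOmega R Δ parts hco)) w w' := by
  refine hB.reflTransGen_step (hB.WOmega_le_weylGroup hF.subset) (fun b hb ↦ ?_) hw hw'
  obtain ⟨c, hbc⟩ := Set.mem_iUnion.1 (hF.union_eq.symm ▸ hb)
  obtain ⟨a, ha, hca⟩ := hmin c
  obtain ⟨u, hu, huθ⟩ := hH.exists_mem_WOmega_apply_eq_neg hB (hF.subset c) ha hca
  exact ⟨hr c, fun d _ ↦ hB.coeff_nonneg (hH.mem_pos c) d,
    one_pos.trans_le (hH.one_le_coeff_highest hB (hF.subset c) hbc), u, hu, a, hF.subset c ha, huθ⟩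

theorem statement_12_general {V : Type} [AddCommGroup V] [Module ℝ V]
    (R : RootSystemData V) (Pos Δ : Set V) (hBase : IsBase R Pos Δ)
    {ι : Type} (parts : ι → Set V)
    (hparts : IsFactorDecomp R Δ parts)
    (hr : ι → V) (hco : ι → (V →₀ ℕ))
    (hhr : IsHighestRootData R Pos parts hr hco)
    (hmin : ∀ c, ∃ a ∈ parts c, hco c a = 1)
    (J : Set V) (hJ : J ⊆ Δ)
    (pJ : (V ≃ₗ[ℝ] V) → (V ≃ₗ[ℝ] V)) (hpJ : IsProjJ R Pos J pJ)
    (wD : V ≃ₗ[ℝ] V) (hwD : IsLongestIn R Δ (weylGroup R) wD)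
    (wJ : V ≃ₗ[ℝ] V) (hwJ : IsLongestIn R Δ (WsubJ R J) wJ)
    (w : V ≃ₗ[ℝ] V) (hw : w ∈ WupJ R Pos J) :
    ∃ (t : ℕ) (ws : ℕ → (V ≃ₗ[ℝ] V)),
      (∀ i, i ≤ t → ws i ∈ weylGroup R) ∧
      pJ (ws 0) = wD * wJ ∧ pJ (ws t) = w ∧
      ∀ i, 1 ≤ i → i ≤ t →
        (∃ u ∈ WOmega R Δ parts hco, pJ (ws i) = pJ (u * ws (i - 1))) ∨
        (len R Δ (pJ (ws (i - 1))) < len R Δ (pJ (ws i)) ∧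
          ∃ s ∈ refls R Δ, pJ (ws i) = pJ (s * ws (i - 1))) := by
  obtain ⟨t, ws, h0, ht, hstep⟩ := exists_seq_of_reflTransGen
    (hBase.reflTransGen_step_WOmega hparts hhr hmin hwD.1 hw.1)
  have hle : WOmega R Δ parts hco ≤ weylGroup R := hBase.WOmega_le_weylGroup hparts.subset
  have hmem : ∀ i ≤ t, ws i ∈ weylGroup R := fun i hi ↦ by
    induction i with
    | zero => exact h0 ▸ hwD.1
    | succ i ih => exact hBase.mem_weylGroup_of_step hle (ih (Nat.le_of_succ_le hi)) (hstep i hi)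
  refine ⟨t, ws, hmem, ?_, ?_, fun i hi hit ↦ ?_⟩
  · rw [h0]
    exact hBase.isProjJ_apply_eq hJ hpJ hwD.1 (hBase.longest_mul_longest_mem_WupJ hJ hwD hwJ)
      (by simpa using inv_mem hwJ.1)
  · rw [ht]
    exact hBase.isProjJ_apply_eq hJ hpJ hw.1 hw (by simp)
  · obtain ⟨i, rfl⟩ := Nat.exists_eq_add_of_le' hi
    exact hBase.isProjJ_step hJ hpJ (hmem i (Nat.le_of_succ_le hit)) (hstep i hit)

/-- Suppose every irreducible factor of `Φ` is of type `A`, `B`, `C` or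
`D`.  Then for every `J ⊆ Δ` and every `w ∈ W^J` there are `t ≥ 0` and a sequence
`w_0, w_1, …, w_t` in `W` with `(w_0)^J = z^J = w_Δ w_J` and `(w_t)^J = w`, such that
for every `1 ≤ i ≤ t` either `(w_i)^J = (u w_{i−1})^J` for some `u ∈ W_Ω`, or both
`ℓ((w_{i−1})^J) < ℓ((w_i)^J)` and `(w_i)^J = (s w_{i−1})^J` for some `s ∈ S`. -/
theorem statement_12 {V : Type} [AddCommGroup V] [Module ℝ V]
    (R : RootSystemData V) (Pos Δ : Set V) (hBase : IsBase R Pos Δ)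
    {ι : Type} [Fintype ι] (parts : ι → Set V)
    (hparts : IsFactorDecomp R Δ parts)
    (hr : ι → V) (hco : ι → (V →₀ ℕ))
    (hhr : IsHighestRootData R Pos parts hr hco)
    (hclassical : NoExceptionalFactor R parts)
    (J : Set V) (hJ : J ⊆ Δ)
    (pJ : (V ≃ₗ[ℝ] V) → (V ≃ₗ[ℝ] V)) (hpJ : IsProjJ R Pos J pJ)
    (wD : V ≃ₗ[ℝ] V) (hwD : IsLongestIn R Δ (weylGroup R) wD)
    (wJ : V ≃ₗ[ℝ] V) (hwJ : IsLongestIn R Δ (WsubJ R J) wJ)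
    (w : V ≃ₗ[ℝ] V) (hw : w ∈ WupJ R Pos J) :
    ∃ (t : ℕ) (ws : ℕ → (V ≃ₗ[ℝ] V)),
      (∀ i, i ≤ t → ws i ∈ weylGroup R) ∧
      pJ (ws 0) = wD * wJ ∧ pJ (ws t) = w ∧
      ∀ i, 1 ≤ i → i ≤ t →
        (∃ u ∈ WOmega R Δ parts hco, pJ (ws i) = pJ (u * ws (i - 1))) ∨
        (len R Δ (pJ (ws (i - 1))) < len R Δ (pJ (ws i)) ∧
          ∃ s ∈ refls R Δ, pJ (ws i) = pJ (s * ws (i - 1))) := by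
  exact statement_12_general R Pos Δ hBase parts hparts hr hco hhr
    (hhr.exists_hco_eq_one_of_noExceptionalFactor hBase hparts hclassical)
    J hJ pJ hpJ wD hwD wJ hwJ w hw

end PaperSp
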